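/- For every θ ∈ [0,1], the upper and lower θ-intermediate dimensions of the graph G_{1,2} of the popcorn function and of the set F_{1,2} all coincide, and dim_θ G_{1,2} = dim_θ F_{1,2} = 1 for 0 ≤ θ ≤ 1/2, while dim_θ G_{1,2} = dim_θ F_{1,2} = 4θ/(2θ + 1) for 1/2 < θ ≤ 1. -/

import Mathlib

/-!
The intermediate dimensions of the popcorn graph `G = G_{1,2}` and of `F = F_{1,2}`.

One has `G ⊆ F`, and every bound below holds for any set between the two: covers are constructed
for `F`, and lower bounds are proved for `G`. Both dimensions then follow from `intDim_eq`.

For `θ = 0` the Hausdorff dimension is `1`, since `F` is a countable set together with a segment,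
and `G` projects onto `[0, 1]`.

*Upper bound* (`exists_cheap_cover`). Let `1 / 2 ≤ θ ≤ 1` and `s > 4 θ / (2 θ + 1)`. With
`Q ≈ δ ^ (-a)`, the `O(Q ^ 2)` points of denominator at most `Q` are covered by balls of diameter
`δ ^ (1 / θ)`, and the rest of `F` lies in a strip of height `1 / Q`, covered by a grid of balls of
diameter `δ`. For a suitable `a` the resulting sum tends to `0` with `δ`. At `θ = 1 / 2` the
critical exponent is `1`, and the covers for `1 / 2` are admissible for all smaller parameters.

*Lower bound.* For `θ ≤ 1 / 2` the projection to the axis shows that the diameters in a cover of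
`G` add up to at least `1` (`one_le_sum_diam`). For `θ > 1 / 2` (`exists_lower_bound`) the energy
method applies with `D = 4 θ / (2 θ + 1)`, using the points of `G` above the reduced fractions with
denominator in `(Q, 4 Q]`, where `Q ≈ δ ^ (-2 / (2 θ + 1))`. There are at least `Q ^ 2` of them
(`card_redFrac_lower`), and at most a constant times `r ^ 2 Q ^ 5` ordered pairs of distinct ones
are within distance `r ≤ δ` (`card_near_le`), which is the count expected of equidistributed points.
The arithmetic input is `card_closePairs`: two distinct points of the same denominator are too far
apart, so the difference of the denominators is a nonzero integer `h`, and the pairs with a given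
`h` can be counted through the determinant `a d - b c` of the two fractions. Dyadic summation
(`sum_rpow_neg_le`) bounds the energy over pairs within distance `δ` by a constant times `Q ^ 4`,
and the Cauchy-Schwarz inequality over the sets of the cover (`card_sq_le_energy_mul`) bounds
`∑ diam ^ D` from below.
-/

open Set MeasureTheory Filter

noncomputable section

/-- Minimal number of closed axis-parallel cubes of side length `δ` needed to cover `S`. -/
def cubeCoverNum (n : ℕ) (δ : ℝ) (S : Set (EuclideanSpace ℝ (Fin n))) : ℕ :=
  sInf {m : ℕ | ∃ c : Fin m → (Fin n → ℝ),
    S ⊆ ⋃ i, {z : EuclideanSpace ℝ (Fin n) | ∀ j, z j ∈ Set.Icc (c i j) (c i j + δ)}}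

-- The popcorn pyramid function `f_{t,d}` on `[0,1]^{d-1}`.
open Classical in
def popcornFun (t : ℝ) (d : ℕ) (x : Fin (d-1) → ℝ) : ℝ :=
  if h : ∃ q : ℕ, ∃ p : Fin (d-1) → ℕ,
      (∀ i, 1 ≤ p i ∧ p i < q ∧ Nat.Coprime (p i) q) ∧ (∀ i, x i = (p i : ℝ) / (q : ℝ))
  then (h.choose : ℝ) ^ (-t)
  else 0

/-- The graph `G_{t,d}` of the popcorn pyramid function, as a subset of `ℝ^d`. -/
def Gset (t : ℝ) (d : ℕ) : Set (EuclideanSpace ℝ (Fin d)) :=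
  {z | ∃ x : Fin (d-1) → ℝ, (∀ i, x i ∈ Set.Icc (0:ℝ) 1) ∧
    (∀ i : Fin (d-1), z (Fin.castLE (Nat.sub_le d 1) i) = x i) ∧
    (∀ j : Fin d, (j : ℕ) = d - 1 → z j = popcornFun t d x)}

/-- The set `F_{t,d} ⊆ ℝ^d`. -/
def Fset (t : ℝ) (d : ℕ) : Set (EuclideanSpace ℝ (Fin d)) :=
  {z | ∃ q : ℕ, ∃ p : Fin (d-1) → ℕ, (∀ i, 1 ≤ p i ∧ p i < q) ∧
      (∀ i : Fin (d-1), z (Fin.castLE (Nat.sub_le d 1) i) = (p i : ℝ) / (q : ℝ)) ∧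
      (∀ j : Fin d, (j : ℕ) = d - 1 → z j = (q : ℝ) ^ (-t))} ∪
  {z | (∀ i : Fin (d-1), z (Fin.castLE (Nat.sub_le d 1) i) ∈ Set.Icc (0:ℝ) 1) ∧
    (∀ j : Fin d, (j : ℕ) = d - 1 → z j = 0)}

/-- Upper box dimension, via covering numbers by closed cubes. -/
def upperBoxDim (n : ℕ) (S : Set (EuclideanSpace ℝ (Fin n))) : ℝ :=
  limsup (fun δ : ℝ => Real.log (cubeCoverNum n δ S) / (-Real.log δ)) (nhdsWithin 0 (Set.Ioi 0))

/-- Lower box dimension, via covering numbers by closed cubes. -/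
def lowerBoxDim (n : ℕ) (S : Set (EuclideanSpace ℝ (Fin n))) : ℝ :=
  liminf (fun δ : ℝ => Real.log (cubeCoverNum n δ S) / (-Real.log δ)) (nhdsWithin 0 (Set.Ioi 0))

/-- Assouad dimension. -/
def assouadDim (n : ℕ) (S : Set (EuclideanSpace ℝ (Fin n))) : ℝ :=
  sInf {α : ℝ | ∃ C : ℝ, 0 < C ∧ ∀ x ∈ S, ∀ r R : ℝ, 0 < r → r < R →
    (cubeCoverNum n r (Metric.closedBall x R ∩ S) : ℝ) ≤ C * (R / r) ^ α}

/-- Upper θ-intermediate dimension (with the convention that `θ = 0` gives Hausdorff dimension).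
Covers are finite, which is no loss of generality since all covering sets have diameter
bounded below by `δ^(1/θ) > 0`. -/
def upperIntDim (n : ℕ) (θ : ℝ) (S : Set (EuclideanSpace ℝ (Fin n))) : ℝ :=
  if θ = 0 then (dimH S).toReal else
  sInf {s : ℝ | 0 ≤ s ∧ ∀ ε : ℝ, 0 < ε → ∃ δ₀ : ℝ, 0 < δ₀ ∧ δ₀ ≤ 1 ∧
    ∀ δ : ℝ, 0 < δ → δ < δ₀ →
    ∃ (m : ℕ) (U : Fin m → Set (EuclideanSpace ℝ (Fin n))),
      S ⊆ (⋃ i, U i) ∧ (∀ i, δ ^ (1/θ) ≤ Metric.diam (U i) ∧ Metric.diam (U i) ≤ δ) ∧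
      (∑ i, Metric.diam (U i) ^ s) ≤ ε}

/-- Lower θ-intermediate dimension (with the convention that `θ = 0` gives Hausdorff dimension). -/
def lowerIntDim (n : ℕ) (θ : ℝ) (S : Set (EuclideanSpace ℝ (Fin n))) : ℝ :=
  if θ = 0 then (dimH S).toReal else
  sInf {s : ℝ | 0 ≤ s ∧ ∀ ε : ℝ, 0 < ε → ∀ δ₀ : ℝ, 0 < δ₀ → δ₀ ≤ 1 →
    ∃ δ : ℝ, 0 < δ ∧ δ < δ₀ ∧
    ∃ (m : ℕ) (U : Fin m → Set (EuclideanSpace ℝ (Fin n))),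
      S ⊆ (⋃ i, U i) ∧ (∀ i, δ ^ (1/θ) ≤ Metric.diam (U i) ∧ Metric.diam (U i) ≤ δ) ∧
      (∑ i, Metric.diam (U i) ^ s) ≤ ε}

/-- `l_t(k,δ) = ⌊(1/(kδ))^(1/t)⌋`. -/
def lfun (t δ : ℝ) (k : ℕ) : ℕ := Nat.floor ((1/((k:ℝ)*δ)) ^ (1/t))

/-- The Duffin–Schaeffer sets `E^{(d-1)}(δ,n) ⊆ ℝ^{d-1}`. -/
def Eset (d : ℕ) (δ : ℝ) (n : ℕ) : Set (EuclideanSpace ℝ (Fin (d-1))) :=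
  {z | ∃ m : Fin (d-1) → ℕ, (∀ i, 1 ≤ m i ∧ m i < n ∧ Nat.Coprime (m i) n) ∧
    ∀ i, z i ∈ Set.Ioo ((m i : ℝ)/(n:ℝ) - δ) ((m i : ℝ)/(n:ℝ) + δ)}

/-- The horizontal-layer input sets `L_{t,d}(δ,k) ⊆ [0,1]^{d-1}`. -/
def Lset (t : ℝ) (d : ℕ) (δ : ℝ) (k : ℕ) : Set (EuclideanSpace ℝ (Fin (d-1))) :=
  {z | ∃ n : ℕ, lfun t δ (k+1) < n ∧ n ≤ lfun t δ k ∧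
    ∃ m : Fin (d-1) → ℕ, (∀ i, 1 ≤ m i ∧ m i < n ∧ Nat.Coprime (m i) n) ∧
    ∀ i, z i = (m i : ℝ)/(n:ℝ)}

end

/-! ### The two sets in coordinates -/

theorem mem_Gset_iff (z : EuclideanSpace ℝ (Fin 2)) :
    z ∈ Gset 1 2 ↔ z 0 ∈ Icc (0:ℝ) 1 ∧ z 1 = popcornFun 1 2 (fun _ => z 0) := by
  constructor
  · rintro ⟨x, hx, h0, h1⟩
    have e0 : z 0 = x 0 := h0 0
    have e1 : z 1 = popcornFun 1 2 x := h1 1 rfl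
    have hxe : x = fun _ => z 0 := by
      funext i; rw [e0]; congr 1; exact Subsingleton.elim (α := Fin 1) _ _
    refine ⟨e0 ▸ hx 0, ?_⟩
    rw [e1, ← hxe]
  · rintro ⟨h0, h1⟩
    refine ⟨fun _ => z 0, fun _ => h0, fun i => ?_, fun j hj => ?_⟩
    · have : i = 0 := Subsingleton.elim (α := Fin 1) _ _
      subst this; rfl
    · have : j = 1 := Fin.ext hj
      subst this; exact h1

theorem mem_Fset_iff (z : EuclideanSpace ℝ (Fin 2)) :
    z ∈ Fset 1 2 ↔ (∃ p q : ℕ, 1 ≤ p ∧ p < q ∧ z 0 = (p:ℝ) / q ∧ z 1 = 1 / (q:ℝ)) ∨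
      (z 0 ∈ Icc (0:ℝ) 1 ∧ z 1 = 0) := by
  constructor
  · rintro (⟨q, p, hp, h0, h1⟩ | ⟨h0, h1⟩)
    · refine Or.inl ⟨p 0, q, (hp 0).1, (hp 0).2, h0 0, ?_⟩
      rw [h1 1 rfl, Real.rpow_neg_one, one_div]
    · exact Or.inr ⟨h0 0, h1 1 rfl⟩
  · rintro (⟨p, q, hp, hq, h0, h1⟩ | ⟨h0, h1⟩)
    · refine Or.inl ⟨q, fun _ => p, fun _ => ⟨hp, hq⟩, fun i => ?_, fun j hj => ?_⟩
      · have : i = 0 := Subsingleton.elim (α := Fin 1) _ _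
        subst this; exact h0
      · have : j = 1 := Fin.ext hj
        subst this; rw [h1, Real.rpow_neg_one, one_div]
    · refine Or.inr ⟨fun i => ?_, fun j hj => ?_⟩
      · have : i = 0 := Subsingleton.elim (α := Fin 1) _ _
        subst this; exact h0
      · have : j = 1 := Fin.ext hj
        subst this; exact h1

/-- The value of the popcorn function at a reduced fraction does not depend on the
representation picked by choice, since the reduced denominator is unique. -/
theorem popcornFun_reduced {p q : ℕ} (hp : 1 ≤ p) (hpq : p < q) (hc : Nat.Coprime p q) :
    popcornFun 1 2 (fun _ => (p:ℝ) / q) = 1 / (q:ℝ) := by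
  have h : ∃ q' : ℕ, ∃ p' : Fin (2-1) → ℕ,
      (∀ i, 1 ≤ p' i ∧ p' i < q' ∧ Nat.Coprime (p' i) q') ∧
        (∀ i, (fun _ : Fin (2-1) => (p:ℝ) / q) i = (p' i : ℝ) / (q' : ℝ)) :=
    ⟨q, fun _ => p, fun _ => ⟨hp, hpq, hc⟩, fun _ => rfl⟩
  have hq : h.choose = q := by
    obtain ⟨p', h1, h2⟩ := h.choose_spec
    obtain ⟨h3, h4, h5⟩ := h1 0
    have h6 := h2 0
    simp only at h6
    generalize h.choose = q' at *
    generalize p' 0 = p'' at *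
    have hq0 : (q:ℝ) ≠ 0 := by norm_cast; omega
    have hq0' : (q':ℝ) ≠ 0 := by norm_cast; omega
    rw [div_eq_div_iff hq0 hq0'] at h6
    have h7 : p * q' = p'' * q := by exact_mod_cast h6
    apply Nat.dvd_antisymm
    · exact h5.symm.dvd_of_dvd_mul_left ⟨p, by rw [← h7]; ring⟩
    · exact hc.symm.dvd_of_dvd_mul_left ⟨p'', by rw [h7]; ring⟩
  rw [popcornFun, dif_pos h, hq, Real.rpow_neg_one, one_div]

theorem reduced_mem_Gset {p q : ℕ} (hp : 1 ≤ p) (hpq : p < q) (hc : Nat.Coprime p q) :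
    !₂[(p:ℝ) / q, 1 / (q:ℝ)] ∈ Gset 1 2 := by
  rw [mem_Gset_iff]
  have hq : (0:ℝ) < q := by norm_cast; omega
  have h : (p:ℝ) ≤ q := by exact_mod_cast hpq.le
  refine ⟨⟨?_, ?_⟩, ?_⟩
  · simp; positivity
  · simpa using (div_le_one hq).2 h
  · simpa using (popcornFun_reduced hp hpq hc).symm

theorem Gset_subset_Fset : Gset 1 2 ⊆ Fset 1 2 := by
  intro z hz
  rw [mem_Gset_iff] at hz
  rw [mem_Fset_iff]
  obtain ⟨h0, h1⟩ := hz
  by_cases h : ∃ q : ℕ, ∃ p : Fin (2-1) → ℕ,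
      (∀ i, 1 ≤ p i ∧ p i < q ∧ Nat.Coprime (p i) q) ∧
        (∀ i, (fun _ : Fin (2-1) => z 0) i = (p i : ℝ) / (q : ℝ))
  · obtain ⟨q, p, hp, hx⟩ := h
    have hx0 : z 0 = (p 0 : ℝ) / q := hx 0
    refine Or.inl ⟨p 0, q, (hp 0).1, (hp 0).2.1, hx0, ?_⟩
    rw [h1, hx0]
    exact popcornFun_reduced (hp 0).1 (hp 0).2.1 (hp 0).2.2
  · exact Or.inr ⟨h0, by rw [h1, popcornFun, dif_neg h]⟩

theorem lipschitz_fst : LipschitzWith 1 (fun z : EuclideanSpace ℝ (Fin 2) => z 0) := by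
  refine LipschitzWith.of_dist_le_mul fun x y => ?_
  rw [NNReal.coe_one, one_mul, dist_eq_norm, dist_eq_norm]
  exact PiLp.norm_apply_le (x - y) 0

theorem Icc_subset_image_Gset :
    Icc (0:ℝ) 1 ⊆ (fun z : EuclideanSpace ℝ (Fin 2) => z 0) '' Gset 1 2 := by
  intro x hx
  refine ⟨!₂[x, popcornFun 1 2 (fun _ => x)], ?_, by simp⟩
  rw [mem_Gset_iff]
  exact ⟨by simpa using hx, by simp⟩

/-! ### Hausdorff dimension -/

theorem one_le_dimH_Gset : 1 ≤ dimH (Gset 1 2) := by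
  have h1 : dimH (Icc (0:ℝ) 1) = 1 := by
    rw [Real.dimH_of_nonempty_interior (by rw [interior_Icc]; exact ⟨1 / 2, by norm_num⟩),
      Module.finrank_self, Nat.cast_one]
  refine h1.symm.le.trans ?_
  exact (dimH_mono Icc_subset_image_Gset).trans (lipschitz_fst.dimH_image_le _)

theorem dimH_Fset_le_one : dimH (Fset 1 2) ≤ 1 := by
  set f : ℝ → EuclideanSpace ℝ (Fin 2) := fun x => !₂[x, 0] with hf
  set g : ℕ × ℕ → EuclideanSpace ℝ (Fin 2) := fun x => !₂[(x.1:ℝ) / x.2, 1 / (x.2:ℝ)] with hg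
  have hfl : LipschitzWith 1 f := by
    refine LipschitzWith.of_dist_le_mul fun x y => ?_
    rw [hf, EuclideanSpace.dist_eq]
    simp
  have hsub : Fset 1 2 ⊆ range g ∪ f '' univ := by
    intro z hz
    rw [mem_Fset_iff] at hz
    rcases hz with ⟨p, q, -, -, h0, h1⟩ | ⟨h0, h1⟩
    · refine Or.inl ⟨(p, q), ?_⟩
      ext i; fin_cases i <;> simp [hg, h0, h1]
    · refine Or.inr ⟨z 0, mem_univ _, ?_⟩
      ext i; fin_cases i <;> simp [hf, h1]
  refine (dimH_mono hsub).trans ?_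
  rw [dimH_union, dimH_countable (countable_range g)]
  refine max_le (by simp) ((hfl.dimH_image_le _).trans ?_)
  rw [Real.dimH_univ]

theorem dimH_between {S : Set (EuclideanSpace ℝ (Fin 2))} (hG : Gset 1 2 ⊆ S)
    (hF : S ⊆ Fset 1 2) : (dimH S).toReal = 1 := by
  have : dimH S = 1 :=
    le_antisymm ((dimH_mono hF).trans dimH_Fset_le_one)
      (one_le_dimH_Gset.trans (dimH_mono hG))
  rw [this, ENNReal.toReal_one]

/-! ### Counting close pairs of fractions -/

/-- The numerator-denominator pairs of the reduced fractions `a / b ∈ (0, 1)` with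
`Q < b ≤ 4 Q`. -/
def redFrac (Q : ℕ) : Finset (ℕ × ℕ) :=
  (Finset.Ioc Q (4 * Q) ×ˢ Finset.range (4 * Q)).image Prod.swap |>.filter
    fun x => 1 ≤ x.1 ∧ x.1 < x.2 ∧ Nat.Coprime x.1 x.2

theorem mem_redFrac {Q : ℕ} {x : ℕ × ℕ} :
    x ∈ redFrac Q ↔ (Q < x.2 ∧ x.2 ≤ 4 * Q) ∧ 1 ≤ x.1 ∧ x.1 < x.2 ∧ Nat.Coprime x.1 x.2 := by
  obtain ⟨a, b⟩ := x
  simp only [redFrac, Finset.mem_filter, Finset.mem_image, Finset.mem_product, Finset.mem_Ioc,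
    Finset.mem_range, Prod.exists, Prod.swap_prod_mk, Prod.mk.injEq]
  constructor
  · rintro ⟨⟨_, _, ⟨h1, h2⟩, rfl, rfl⟩, h⟩
    exact ⟨h1, h⟩
  · rintro ⟨h1, h⟩
    exact ⟨⟨b, a, ⟨h1, by omega⟩, rfl, rfl⟩, h⟩

/-- Summing `n = ∑_{d ∣ n} φ(d)` over `n ≤ X`. -/
theorem sum_range_le_sum_totient (X : ℕ) :
    ∑ n ∈ Finset.Icc 1 X, n ≤ ∑ d ∈ Finset.Icc 1 X, Nat.totient d * (X / d) := by
  calc ∑ n ∈ Finset.Icc 1 X, n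
      = ∑ n ∈ Finset.Icc 1 X, ∑ d ∈ n.divisors, Nat.totient d := by
        simp_rw [Nat.sum_totient]
    _ = ∑ n ∈ Finset.Icc 1 X, ∑ d ∈ (Finset.Icc 1 X).filter (· ∣ n), Nat.totient d := by
        refine Finset.sum_congr rfl fun n hn => Finset.sum_congr ?_ fun _ _ => rfl
        rw [Finset.mem_Icc] at hn
        ext d
        simp only [Nat.mem_divisors, Finset.mem_filter, Finset.mem_Icc]
        constructor
        · rintro ⟨h, -⟩
          exact ⟨⟨Nat.pos_of_dvd_of_pos h hn.1, (Nat.le_of_dvd hn.1 h).trans hn.2⟩, h⟩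
        · rintro ⟨-, h⟩
          exact ⟨h, by omega⟩
    _ = ∑ d ∈ Finset.Icc 1 X, ∑ n ∈ (Finset.Icc 1 X).filter (d ∣ ·), Nat.totient d := by
        simp_rw [Finset.sum_filter]
        exact Finset.sum_comm
    _ ≤ ∑ d ∈ Finset.Icc 1 X, Nat.totient d * (X / d) := by
        refine Finset.sum_le_sum fun d hd => ?_
        rw [Finset.sum_const, smul_eq_mul, mul_comm]
        refine Nat.mul_le_mul_left _ ?_
        have := Nat.Ioc_filter_dvd_card_eq_div X d
        rw [← this]
        refine Finset.card_le_card fun x hx => ?_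
        simp only [Finset.mem_filter, Finset.mem_Icc, Finset.mem_Ioc] at hx ⊢
        exact ⟨⟨by omega, hx.1.2⟩, hx.2⟩

/-- In the sum over `d ≤ 4 Q` of `φ(d) ⌊4 Q / d⌋`, which is at least `8 Q ^ 2`, the terms with
`d ≤ Q` contribute at most `4 Q ^ 2`, and in the others the floor is at most `4`. -/
theorem sum_totient_lower {Q : ℕ} (hQ : 1 ≤ Q) :
    Q ^ 2 ≤ ∑ d ∈ Finset.Ioc Q (4 * Q), Nat.totient d := by
  have h1 := sum_range_le_sum_totient (4 * Q)
  have h2 : (∑ n ∈ Finset.Icc 1 (4 * Q), n) * 2 = 4 * Q * (4 * Q + 1) := by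
    have := Finset.sum_range_id_mul_two (4 * Q + 1)
    rw [Finset.range_eq_Ico, Finset.sum_eq_sum_Ico_succ_bot (by omega)] at this
    have e : Finset.Icc 1 (4 * Q) = Finset.Ico (0 + 1) (4 * Q + 1) := by
      ext x; simp only [Finset.mem_Icc, Finset.mem_Ico]; omega
    rw [e]
    simp only [zero_add] at this ⊢
    rw [this]; simp; ring
  have hsplit : Finset.Icc 1 (4 * Q) = Finset.Icc 1 Q ∪ Finset.Ioc Q (4 * Q) := by
    ext x; simp only [Finset.mem_Icc, Finset.mem_union, Finset.mem_Ioc]; omega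
  have hdisj : Disjoint (Finset.Icc 1 Q) (Finset.Ioc Q (4 * Q)) := by
    rw [Finset.disjoint_left]; intro x hx hx'
    simp only [Finset.mem_Icc, Finset.mem_Ioc] at hx hx'; omega
  rw [hsplit, Finset.sum_union hdisj, Finset.sum_union hdisj, ← Finset.sum_union hdisj,
    ← hsplit] at h1
  have h3 : ∑ d ∈ Finset.Icc 1 Q, Nat.totient d * (4 * Q / d) ≤ Q * (4 * Q) := by
    have : ∀ d ∈ Finset.Icc 1 Q, Nat.totient d * (4 * Q / d) ≤ 4 * Q := fun d _ =>
      (Nat.mul_le_mul_right _ (Nat.totient_le d)).trans (Nat.mul_div_le _ _)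
    refine (Finset.sum_le_card_nsmul _ _ _ this).trans ?_
    simp
  have h4 : ∑ d ∈ Finset.Ioc Q (4 * Q), Nat.totient d * (4 * Q / d)
      ≤ (∑ d ∈ Finset.Ioc Q (4 * Q), Nat.totient d) * 4 := by
    rw [Finset.sum_mul]
    refine Finset.sum_le_sum fun d hd => Nat.mul_le_mul_left _ ?_
    rw [Finset.mem_Ioc] at hd
    exact Nat.div_le_of_le_mul (by nlinarith)
  nlinarith

theorem card_redFrac_lower {Q : ℕ} (hQ : 1 ≤ Q) : Q ^ 2 ≤ (redFrac Q).card := by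
  refine (sum_totient_lower hQ).trans ?_
  have : ∑ d ∈ Finset.Ioc Q (4 * Q), Nat.totient d =
      ((Finset.Ioc Q (4 * Q)).sigma fun d => (Finset.range d).filter (d.Coprime ·)).card := by
    rw [Finset.card_sigma]; rfl
  rw [this]
  refine Finset.card_le_card_of_injOn (fun x => (x.2, x.1)) ?_ ?_
  · rintro ⟨b, a⟩ hx
    have hx : (Q < b ∧ b ≤ 4 * Q) ∧ a < b ∧ b.Coprime a := by simpa using hx
    rw [Finset.mem_coe, mem_redFrac]
    refine ⟨hx.1, ?_, hx.2.1, hx.2.2.symm⟩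
    rcases Nat.eq_zero_or_pos a with rfl | h
    · have := (Nat.coprime_zero_right b).1 hx.2.2
      omega
    · exact h
  · rintro ⟨b, a⟩ - ⟨d, c⟩ - h
    simp only [Prod.mk.injEq] at h
    obtain ⟨rfl, rfl⟩ := h
    rfl

theorem card_redFrac_upper (Q : ℕ) : (redFrac Q).card ≤ 16 * Q ^ 2 := by
  have : redFrac Q ⊆ Finset.range (4 * Q) ×ˢ Finset.Ioc 0 (4 * Q) := by
    intro x hx
    rw [mem_redFrac] at hx
    simp only [Finset.mem_product, Finset.mem_range, Finset.mem_Ioc]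
    omega
  refine (Finset.card_le_card this).trans ?_
  rw [Finset.card_product]; simp; nlinarith

/-- Integers `a` for which `a h` lies in a fixed interval of length `2 M`. -/
theorem card_mul_window (T : Finset ℤ) (h k : ℤ) (M : ℕ) (hh : h ≠ 0)
    (hT : ∀ a ∈ T, |a * h - k| ≤ M) : T.card * h.natAbs ≤ 2 * M + h.natAbs := by
  rcases T.eq_empty_or_nonempty with rfl | hne
  · simp
  set a₀ := T.min' hne
  have hpos : 0 < h.natAbs := Int.natAbs_pos.2 hh
  have hsub : T ⊆ Finset.Icc a₀ (a₀ + (2 * M / h.natAbs : ℕ)) := by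
    intro a ha
    have h1 : a₀ ≤ a := T.min'_le a ha
    rw [Finset.mem_Icc]
    refine ⟨h1, ?_⟩
    have h2 := hT a ha
    have h3 := hT a₀ (T.min'_mem hne)
    have h4 : |(a - a₀) * h| ≤ 2 * M := by
      rw [abs_le] at *
      constructor <;> nlinarith
    rw [abs_mul, abs_of_nonneg (by linarith), Int.abs_eq_natAbs] at h4
    have h5 : a - a₀ ≤ (2 * M : ℤ) / (h.natAbs : ℤ) :=
      Int.le_ediv_of_mul_le (by exact_mod_cast hpos) h4
    have h6 : ((2 * M / h.natAbs : ℕ) : ℤ) = (2 * M : ℤ) / (h.natAbs : ℤ) := by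
      rw [Int.natCast_div, Nat.cast_mul, Nat.cast_ofNat]
    rw [h6]
    linarith
  have h6 := Finset.card_le_card hsub
  rw [Int.card_Icc] at h6
  have h7 : T.card ≤ 2 * M / h.natAbs + 1 := by
    generalize 2 * M / h.natAbs = q at h6 ⊢
    omega
  calc T.card * h.natAbs ≤ (2 * M / h.natAbs + 1) * h.natAbs := Nat.mul_le_mul_right _ h7
    _ = 2 * M / h.natAbs * h.natAbs + h.natAbs := by ring
    _ ≤ 2 * M + h.natAbs := Nat.add_le_add_right (Nat.div_mul_le_self _ _) _

/-- The ordered pairs of distinct fractions `(a/b, c/d)` in `redFrac Q` with `|d - b| ≤ M` and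
`|a d - b c| ≤ M`. -/
def closePairs (Q M : ℕ) : Finset ((ℕ × ℕ) × (ℕ × ℕ)) :=
  (redFrac Q ×ˢ redFrac Q).filter fun p => p.1 ≠ p.2 ∧
    |(p.2.2 : ℤ) - p.1.2| ≤ M ∧ |(p.1.1 : ℤ) * p.2.2 - p.1.2 * p.2.1| ≤ M

/-- With `h = d - b` and `g = c - a` one has `a d - b c = a h - b g`.  As `M < Q`, a pair with
`h = 0` would force `a = c`, and `h ≠ 0` forces `|g| ≤ |h|`.  For fixed `h, g, b` at most
`2 M / |h| + 1` numerators `a` remain, and summing over `g` cancels the factor `1 / |h|`. -/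
theorem card_closePairs {Q M : ℕ} (hM : M < Q) :
    (closePairs Q M).card ≤ 54 * Q * M ^ 2 := by
  set H : Finset ℤ := (Finset.Icc (-(M:ℤ)) M).erase 0 with hH
  set W : ℤ → ℤ → ℕ → Finset ℤ := fun h g b =>
    (Finset.Icc (0:ℤ) (4 * Q)).filter fun a => |a * h - b * g| ≤ M with hW
  set Z : Finset (Σ _ : ℤ, Σ _ : ℤ, Σ _ : ℕ, ℤ) :=
    H.sigma fun h => (Finset.Icc (-|h|) |h|).sigma fun g =>
      (Finset.Ioc Q (4 * Q)).sigma fun b => W h g b with hZ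
  have hcard : (closePairs Q M).card ≤ Z.card := by
    refine Finset.card_le_card_of_injOn
      (fun p => ⟨(p.2.2 : ℤ) - p.1.2, (p.2.1 : ℤ) - p.1.1, p.1.2, (p.1.1 : ℤ)⟩) ?_ ?_
    · rintro ⟨⟨a, b⟩, ⟨c, d⟩⟩ hp
      simp only [closePairs, Finset.coe_filter, Finset.mem_product, mem_redFrac, mem_ofPred_eq] at hp
      obtain ⟨⟨⟨⟨hb1, hb2⟩, ha1, hab, -⟩, ⟨hd1, hd2⟩, hc1, hcd, -⟩, hne, h1, h2⟩ := hp
      have hh0 : (d:ℤ) - b ≠ 0 := by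
        intro h
        have hdb : d = b := by omega
        subst hdb
        have e : (a:ℤ) * d - d * c = d * (a - c) := by ring
        rw [e, abs_mul, Nat.abs_cast] at h2
        have hac : (a:ℤ) - c = 0 := by
          by_contra h'
          have : (1:ℤ) ≤ |(a:ℤ) - c| := Int.one_le_abs h'
          nlinarith
        apply hne
        have : a = c := by omega
        rw [this]
      have hg : |(c:ℤ) - a| ≤ |(d:ℤ) - b| := by
        have e : (b:ℤ) * (c - a) = a * (d - b) - (a * d - b * c) := by ring
        have h3 : (b:ℤ) * |(c:ℤ) - a| ≤ a * |(d:ℤ) - b| + M := by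
          calc (b:ℤ) * |(c:ℤ) - a| = |(b:ℤ) * (c - a)| := by rw [abs_mul, Nat.abs_cast]
            _ ≤ |(a:ℤ) * (d - b)| + |(a:ℤ) * d - b * c| := by rw [e]; exact abs_sub _ _
            _ ≤ a * |(d:ℤ) - b| + M := by rw [abs_mul, Nat.abs_cast]; gcongr
        by_contra h4
        push Not at h4
        have h5 : |(d:ℤ) - b| + 1 ≤ |(c:ℤ) - a| := h4
        have h6 : (0:ℤ) ≤ |(d:ℤ) - b| := abs_nonneg _
        have h7 : (a:ℤ) < b := by exact_mod_cast hab
        have h8 : (M:ℤ) < b := by omega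
        nlinarith
      have hm : |(a:ℤ) * (d - b) - b * (c - a)| ≤ M := by
        have e : (a:ℤ) * (d - b) - b * (c - a) = a * d - b * c := by ring
        rw [e]; exact h2
      simp only [hZ, hH, hW, Finset.mem_coe, Finset.mem_sigma, Finset.mem_erase, Finset.mem_Icc,
        Finset.mem_Ioc, Finset.mem_filter]
      refine ⟨⟨hh0, abs_le.1 h1⟩, abs_le.1 hg, ⟨hb1, hb2⟩, ⟨by omega, by omega⟩, hm⟩
    · rintro ⟨⟨a, b⟩, ⟨c, d⟩⟩ - ⟨⟨a', b'⟩, ⟨c', d'⟩⟩ - h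
      simp only [Sigma.mk.injEq, heq_eq_eq] at h
      obtain ⟨h1, h2, h3, h4⟩ := h
      simp only [Prod.mk.injEq]
      omega
  refine hcard.trans ?_
  have hinner : ∀ h ∈ H, ((Finset.Icc (-|h|) |h|).sigma fun g =>
      (Finset.Ioc Q (4 * Q)).sigma fun b => W h g b).card ≤ 27 * Q * M := by
    intro h hh
    rw [hH, Finset.mem_erase, Finset.mem_Icc] at hh
    have hpos : 0 < h.natAbs := Int.natAbs_pos.2 hh.1
    have hle : h.natAbs ≤ M := by omega
    have hWc : ∀ g b, (W h g b).card * h.natAbs ≤ 3 * M := fun g b => by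
      have := card_mul_window (W h g b) h (b * g) M hh.1 fun a ha => (Finset.mem_filter.1 ha).2
      omega
    have hgc : (Finset.Icc (-|h|) |h|).card ≤ 3 * h.natAbs := by
      rw [Int.card_Icc, Int.abs_eq_natAbs]; omega
    rw [Finset.card_sigma]
    simp_rw [Finset.card_sigma]
    have hb : ∀ g ∈ Finset.Icc (-|h|) |h|,
        (∑ b ∈ Finset.Ioc Q (4 * Q), (W h g b).card) * h.natAbs ≤ 9 * Q * M := fun g _ => by
      rw [Finset.sum_mul]
      refine (Finset.sum_le_card_nsmul _ _ _ fun b _ => hWc g b).trans ?_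
      rw [Nat.card_Ioc, smul_eq_mul]
      have : 4 * Q - Q = 3 * Q := by omega
      rw [this]; nlinarith
    have hs : (∑ g ∈ Finset.Icc (-|h|) |h|, ∑ b ∈ Finset.Ioc Q (4 * Q), (W h g b).card)
        * h.natAbs ≤ (27 * Q * M) * h.natAbs := by
      rw [Finset.sum_mul]
      refine (Finset.sum_le_card_nsmul _ _ _ hb).trans ?_
      rw [smul_eq_mul]
      calc _ ≤ 3 * h.natAbs * (9 * Q * M) := Nat.mul_le_mul_right _ hgc
        _ = _ := by ring
    exact Nat.le_of_mul_le_mul_right hs hpos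
  rw [hZ, Finset.card_sigma]
  refine (Finset.sum_le_card_nsmul _ _ _ hinner).trans ?_
  have hHc : H.card = 2 * M := by
    rw [hH, Finset.card_erase_of_mem (by simp), Int.card_Icc]; omega
  rw [hHc, smul_eq_mul]
  nlinarith

/-! ### The energy estimate -/

/-- Dyadic summation: if at most `K r ^ 2` indices satisfy `f ≤ r`, for each `r ≤ δ`, then the
scale `δ` dominates the sum of `f ^ (-s)`, because `s < 2`. -/
theorem sum_rpow_neg_le {ι : Type*} (f : ι → ℝ) {K s C : ℝ} (hK : 0 ≤ K) (hs : 0 < s)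
    (hs2 : s < 2) (hC0 : 0 ≤ C) (hC : 4 + C * 2 ^ (s - 2) ≤ C) (J : ℕ) :
    ∀ (S : Finset ι) (δ : ℝ), 0 < δ → (∀ i ∈ S, δ / 2 ^ J < f i ∧ f i ≤ δ) →
      (∀ r, 0 < r → r ≤ δ → ((S.filter fun i => f i ≤ r).card : ℝ) ≤ K * r ^ 2) →
      ∑ i ∈ S, f i ^ (-s) ≤ C * K * δ ^ (2 - s) := by
  induction J with
  | zero =>
    intro S δ hδ hf _
    have : S = ∅ := by
      refine Finset.eq_empty_of_forall_notMem fun i hi => ?_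
      have := hf i hi
      simp only [pow_zero, div_one] at this
      linarith [this.1, this.2]
    rw [this, Finset.sum_empty]
    positivity
  | succ J ih =>
    intro S δ hδ hf hcard
    rw [← Finset.sum_filter_add_sum_filter_not S (fun i => f i ≤ δ / 2)]
    have h1 : ∑ i ∈ S with f i ≤ δ / 2, f i ^ (-s) ≤ C * K * (δ / 2) ^ (2 - s) := by
      refine ih _ (δ / 2) (by positivity) ?_ ?_
      · intro i hi
        rw [Finset.mem_filter] at hi
        refine ⟨?_, hi.2⟩
        have := (hf i hi.1).1
        rwa [pow_succ', ← div_div] at this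
      · intro r hr hrδ
        refine le_trans ?_ (hcard r hr (by linarith))
        exact_mod_cast Finset.card_le_card
          (Finset.filter_subset_filter _ (Finset.filter_subset _ _))
    have hsplit : δ ^ (2 - s) = δ ^ 2 * δ ^ (-s) := by
      rw [← Real.rpow_natCast δ 2, ← Real.rpow_add hδ]; norm_num [sub_eq_add_neg]
    have h2 : ∑ i ∈ S with ¬ f i ≤ δ / 2, f i ^ (-s) ≤ K * δ ^ (2 - s) * 4 := by
      have hterm : ∀ i ∈ S.filter (fun i => ¬ f i ≤ δ / 2), f i ^ (-s) ≤ (δ / 2) ^ (-s) := by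
        intro i hi
        rw [Finset.mem_filter, not_le] at hi
        exact Real.rpow_le_rpow_of_nonpos (by positivity) hi.2.le (by linarith)
      have hc : ((S.filter fun i => ¬ f i ≤ δ / 2).card : ℝ) ≤ K * δ ^ 2 := by
        refine le_trans ?_ (hcard δ hδ le_rfl)
        refine Nat.cast_le.2 (Finset.card_le_card fun i hi => ?_)
        rw [Finset.mem_filter] at hi ⊢
        exact ⟨hi.1, (hf i hi.1).2⟩
      refine (Finset.sum_le_card_nsmul _ _ _ hterm).trans ?_
      rw [nsmul_eq_mul]
      have h4 : (2:ℝ) ^ s ≤ 4 := by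
        calc (2:ℝ) ^ s ≤ 2 ^ (2:ℝ) := Real.rpow_le_rpow_of_exponent_le (by norm_num) hs2.le
          _ = 4 := by norm_num
      have h5 : (δ / 2) ^ (-s) = δ ^ (-s) * 2 ^ s := by
        rw [Real.div_rpow hδ.le (by norm_num), Real.rpow_neg (by norm_num : (0:ℝ) ≤ 2)]
        field_simp
      rw [h5, hsplit]
      calc _ ≤ (K * δ ^ 2) * (δ ^ (-s) * 4) := by gcongr
        _ = _ := by ring
    have h6 : (δ / 2) ^ (2 - s) = δ ^ (2 - s) * 2 ^ (s - 2) := by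
      rw [Real.div_rpow hδ.le (by norm_num), ← neg_sub 2 s,
        Real.rpow_neg (by norm_num : (0:ℝ) ≤ 2)]
      field_simp
    rw [h6] at h1
    calc _ ≤ C * K * (δ ^ (2 - s) * 2 ^ (s - 2)) + K * δ ^ (2 - s) * 4 := add_le_add h1 h2
      _ = (4 + C * 2 ^ (s - 2)) * (K * δ ^ (2 - s)) := by ring
      _ ≤ C * (K * δ ^ (2 - s)) := by gcongr
      _ = _ := by ring

/-- The energy method: assign each of the points to one set of the cover and apply the
Cauchy–Schwarz inequality to the numbers of points received, noting that two points in the same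
`U i` are at distance at most `diam (U i)`. -/
theorem card_sq_le_energy_mul {X α : Type*} [MetricSpace X] [DecidableEq α] (A : Finset α)
    (P : α → X) {m : ℕ} (U : Fin m → Set X) {η δ s : ℝ} (hη : 0 < η) (hs : 0 ≤ s)
    (hU : ∀ i, η ≤ Metric.diam (U i) ∧ Metric.diam (U i) ≤ δ)
    (hcov : ∀ x ∈ A, P x ∈ ⋃ i, U i) (hinj : ∀ x ∈ A, ∀ y ∈ A, x ≠ y → P x ≠ P y) :
    (A.card : ℝ) ^ 2 ≤ (A.card * η ^ (-s) +
      ∑ p ∈ (A ×ˢ A).filter (fun p => p.1 ≠ p.2 ∧ dist (P p.1) (P p.2) ≤ δ),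
        dist (P p.1) (P p.2) ^ (-s)) * ∑ i, Metric.diam (U i) ^ s := by
  classical
  rcases A.eq_empty_or_nonempty with rfl | ⟨x₀, hx₀⟩
  · simp
  have : ∀ x : α, ∃ i : Fin m, x ∈ A → P x ∈ U i := by
    obtain ⟨i₀, -⟩ := mem_iUnion.1 (hcov x₀ hx₀)
    intro x
    by_cases hx : x ∈ A
    · obtain ⟨i, hi⟩ := mem_iUnion.1 (hcov x hx)
      exact ⟨i, fun _ => hi⟩
    · exact ⟨i₀, fun h => absurd h hx⟩
  choose k hk using this
  have hr : ∀ i, 0 < Metric.diam (U i) := fun i => hη.trans_le (hU i).1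
  have hbdd : ∀ i, Bornology.IsBounded (U i) := fun i => by
    by_contra h
    have := Metric.diam_eq_zero_of_unbounded h
    linarith [hr i]
  have hrs : ∀ i, 0 < Metric.diam (U i) ^ s := fun i => Real.rpow_pos_of_pos (hr i) _
  have hsum_pos : 0 < ∑ i, Metric.diam (U i) ^ s :=
    Finset.sum_pos (fun i _ => hrs i) ⟨k x₀, Finset.mem_univ _⟩
  rw [← div_le_iff₀ hsum_pos]
  have hN : (A.card : ℝ) = ∑ i, ((A.filter fun x => k x = i).card : ℝ) := by
    rw [Finset.card_eq_sum_card_fiberwise (f := k) (t := Finset.univ) (fun x _ => by simp)]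
    push_cast; rfl
  conv_lhs => rw [hN]
  refine (Finset.sq_sum_div_le_sum_sq_div Finset.univ _ (fun i _ => hrs i)).trans ?_
  have hE : ∑ i, ((A.filter fun x => k x = i).card : ℝ) ^ 2 / Metric.diam (U i) ^ s =
      ∑ x ∈ A, ∑ y ∈ A.filter (fun y => k y = k x), Metric.diam (U (k x)) ^ (-s) := by
    rw [← Finset.sum_fiberwise (s := A) (g := k)]
    refine Finset.sum_congr rfl fun i _ => ?_
    have : ∀ x ∈ A.filter (fun x => k x = i),
        ∑ y ∈ A.filter (fun y => k y = k x), Metric.diam (U (k x)) ^ (-s) =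
          ((A.filter fun x => k x = i).card : ℝ) * Metric.diam (U i) ^ (-s) := by
      intro x hx
      rw [(Finset.mem_filter.1 hx).2, Finset.sum_const, nsmul_eq_mul]
    rw [Finset.sum_congr rfl this, Finset.sum_const, nsmul_eq_mul, Real.rpow_neg (hr i).le]
    field_simp
  rw [hE, Finset.sum_filter, Finset.sum_product, ← nsmul_eq_mul, ← Finset.sum_const,
    ← Finset.sum_add_distrib]
  refine Finset.sum_le_sum fun x hx => ?_
  have hxm : x ∈ A.filter (fun y => k y = k x) := by simp [hx]
  rw [← Finset.add_sum_erase _ _ hxm]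
  refine add_le_add (Real.rpow_le_rpow_of_nonpos hη (hU _).1 (by linarith)) ?_
  rw [← Finset.sum_filter]
  have hsub : (A.filter (fun y => k y = k x)).erase x ⊆
      A.filter (fun y => x ≠ y ∧ dist (P x) (P y) ≤ δ) := by
    intro y hy
    simp only [Finset.mem_erase, Finset.mem_filter] at hy ⊢
    refine ⟨hy.2.1, Ne.symm hy.1, (Metric.dist_le_diam_of_mem (hbdd (k x)) (hk x hx) ?_).trans
      (hU _).2⟩
    rw [← hy.2.2]; exact hk y hy.2.1
  refine le_trans ?_ (Finset.sum_le_sum_of_subset_of_nonneg hsub fun y _ _ => by positivity)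
  refine Finset.sum_le_sum fun y hy => ?_
  simp only [Finset.mem_erase, Finset.mem_filter] at hy
  refine Real.rpow_le_rpow_of_nonpos (dist_pos.2 (hinj x hx y hy.2.1 (Ne.symm hy.1))) ?_
    (by linarith)
  refine Metric.dist_le_diam_of_mem (hbdd (k x)) (hk x hx) ?_
  rw [← hy.2.2]; exact hk y hy.2.1

/-- The point of the popcorn graph above the fraction `x.1 / x.2`. -/
noncomputable def fracPoint (x : ℕ × ℕ) : EuclideanSpace ℝ (Fin 2) := !₂[(x.1 : ℝ) / x.2, 1 / (x.2 : ℝ)]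

theorem fracPoint_inj {Q : ℕ} {x y : ℕ × ℕ} (hx : x ∈ redFrac Q)
    (h : fracPoint x = fracPoint y) : x = y := by
  rw [mem_redFrac] at hx
  have h0 : (x.1 : ℝ) / x.2 = (y.1 : ℝ) / y.2 := by
    simpa [fracPoint] using congrArg (fun z : EuclideanSpace ℝ (Fin 2) => z 0) h
  have h1 : (x.2 : ℝ) = (y.2 : ℝ) := by
    simpa [fracPoint] using congrArg (fun z : EuclideanSpace ℝ (Fin 2) => z 1) h
  have hx0 : (x.2 : ℝ) ≠ 0 := by norm_cast; omega
  rw [← h1, div_left_inj' hx0] at h0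
  exact Prod.ext (by exact_mod_cast h0) (by exact_mod_cast h1)

/-- Two points at distance at most `r` give a pair in `closePairs Q M` with
`M = ⌊16 r Q ^ 2⌋`, and `54 * 16 ^ 2 = 13824`. -/
theorem card_near_le {Q : ℕ} (hQ : 1 ≤ Q) {r : ℝ} (hr : 0 < r) (hrQ : 16 * r * Q < 1) :
    (((redFrac Q ×ˢ redFrac Q).filter fun p =>
      p.1 ≠ p.2 ∧ dist (fracPoint p.1) (fracPoint p.2) ≤ r).card : ℝ)
      ≤ 13824 * (Q : ℝ) ^ 5 * r ^ 2 := by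
  have hQ' : (1:ℝ) ≤ Q := by exact_mod_cast hQ
  set M : ℕ := ⌊16 * r * (Q:ℝ) ^ 2⌋₊ with hM
  have hMle : (M : ℝ) ≤ 16 * r * (Q:ℝ) ^ 2 := Nat.floor_le (by positivity)
  have hMQ : M < Q := by
    have : (M : ℝ) < Q := by nlinarith
    exact_mod_cast this
  have hsub : ((redFrac Q ×ˢ redFrac Q).filter fun p =>
      p.1 ≠ p.2 ∧ dist (fracPoint p.1) (fracPoint p.2) ≤ r) ⊆ closePairs Q M := by
    rintro ⟨⟨a, b⟩, ⟨c, d⟩⟩ hp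
    rw [Finset.mem_filter, Finset.mem_product] at hp
    obtain ⟨⟨h1, h2⟩, hne, hd⟩ := hp
    rw [closePairs, Finset.mem_filter, Finset.mem_product]
    refine ⟨⟨h1, h2⟩, hne, ?_⟩
    rw [mem_redFrac] at h1 h2
    dsimp only at h1 h2 hd ⊢
    have hb : (0:ℝ) < b := by norm_cast; omega
    have hd0 : (0:ℝ) < d := by norm_cast; omega
    have hb4 : (b:ℝ) ≤ 4 * Q := by exact_mod_cast h1.1.2
    have hd4 : (d:ℝ) ≤ 4 * Q := by exact_mod_cast h2.1.2
    have hbd : (b:ℝ) * d ≤ 16 * (Q:ℝ) ^ 2 := by nlinarith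
    have e0 : |(a:ℝ) / b - c / d| ≤ r := by
      have := (PiLp.dist_apply_le (fracPoint (a, b)) (fracPoint (c, d)) 0).trans hd
      simpa [fracPoint, Real.dist_eq] using this
    have e1 : |1 / (b:ℝ) - 1 / d| ≤ r := by
      have := (PiLp.dist_apply_le (fracPoint (a, b)) (fracPoint (c, d)) 1).trans hd
      simpa [fracPoint, Real.dist_eq] using this
    -- multiplying by `b d ≤ 16 Q ^ 2` turns both conditions into integer inequalities
    have key : ∀ (w : ℝ) (z : ℤ), |w| ≤ r → (z : ℝ) = w * (b * d) → |z| ≤ (M : ℤ) := by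
      intro w z hw hz
      have h3 : |(z:ℝ)| ≤ 16 * r * (Q:ℝ) ^ 2 := by
        rw [hz, abs_mul, abs_of_pos (by positivity : (0:ℝ) < b * d)]
        calc |w| * (b * d) ≤ r * (16 * (Q:ℝ) ^ 2) := by gcongr
          _ = _ := by ring
      have h4 : z.natAbs ≤ M := by
        rw [hM]
        apply Nat.le_floor
        rwa [Nat.cast_natAbs, Int.cast_abs]
      rw [Int.abs_eq_natAbs]
      exact_mod_cast h4
    constructor
    · refine key _ _ e1 ?_
      push_cast
      field_simp
    · refine key _ _ e0 ?_
      push_cast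
      field_simp
  have h5 : ((closePairs Q M).card : ℝ) ≤ 54 * Q * (M:ℝ) ^ 2 := by
    exact_mod_cast card_closePairs hMQ
  calc _ ≤ ((closePairs Q M).card : ℝ) := by exact_mod_cast Finset.card_le_card hsub
    _ ≤ 54 * Q * (16 * r * (Q:ℝ) ^ 2) ^ 2 := h5.trans (by gcongr)
    _ = _ := by ring

/-- A positive power of `δ` is eventually small, with a threshold that is at most `1`. -/
theorem exists_small_rpow {p c : ℝ} (hp : 0 < p) (hc : 0 < c) :
    ∃ δ₀ : ℝ, 0 < δ₀ ∧ δ₀ ≤ 1 ∧ ∀ δ, 0 < δ → δ < δ₀ → δ ^ p < c := by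
  refine ⟨min 1 (c ^ (1 / p)), by positivity, min_le_left _ _, fun δ h0 h1 => ?_⟩
  calc δ ^ p < (c ^ (1 / p)) ^ p :=
        Real.rpow_lt_rpow h0.le (h1.trans_le (min_le_right _ _)) hp
    _ = c := by rw [← Real.rpow_mul hc.le, one_div_mul_cancel hp.ne', Real.rpow_one]

/-- The scale of the denominators is `Q ≈ X = δ ^ (-2 / (2 θ + 1))`.  With
`D = 4 θ / (2 θ + 1)` the smallest admissible diameter `η = δ ^ (1 / θ)` has `η ^ (-D) = X ^ 2`,
and `δ ^ (2 - D) = X⁻¹`, so that the energy of the roughly `X ^ 2` points is at most a constant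
times `X ^ 4`. -/
theorem exists_lower_bound {θ : ℝ} (h : 1 / 2 < θ) :
    ∃ c δ₀ : ℝ, 0 < c ∧ 0 < δ₀ ∧ δ₀ ≤ 1 ∧ ∀ δ : ℝ, 0 < δ → δ < δ₀ →
      ∀ (m : ℕ) (U : Fin m → Set (EuclideanSpace ℝ (Fin 2))), Gset 1 2 ⊆ (⋃ i, U i) →
        (∀ i, δ ^ (1 / θ) ≤ Metric.diam (U i) ∧ Metric.diam (U i) ≤ δ) →
        c ≤ ∑ i, Metric.diam (U i) ^ (4 * θ / (2 * θ + 1)) := by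
  set D : ℝ := 4 * θ / (2 * θ + 1) with hD
  have hden : 0 < 2 * θ + 1 := by linarith
  have hD0 : 0 < D := by positivity
  have hD2 : D < 2 := by rw [hD, div_lt_iff₀ hden]; linarith
  have hpow1 : (2:ℝ) ^ (D - 2) < 1 := Real.rpow_lt_one_of_one_lt_of_neg (by norm_num) (by linarith)
  have hgap : 0 < 1 - (2:ℝ) ^ (D - 2) := by linarith
  set C : ℝ := 4 / (1 - 2 ^ (D - 2)) with hC
  have hC0 : 0 < C := by positivity
  have hCeq : 4 + C * 2 ^ (D - 2) ≤ C := by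
    have : C * (1 - 2 ^ (D - 2)) = 4 := by rw [hC]; field_simp
    linarith
  have hp : 0 < 1 - 2 / (2 * θ + 1) := by
    rw [sub_pos, div_lt_one hden]; linarith
  obtain ⟨δ₀, h0, h1, hδ₀⟩ := exists_small_rpow hp (by norm_num : (0:ℝ) < 1 / 32)
  set B : ℝ := 64 + C * 13824 * 32 with hB
  have hB0 : 0 < B := by positivity
  refine ⟨1 / B, δ₀, by positivity, h0, h1, fun δ hδ hδlt m U hcov hU => ?_⟩
  have hδ1 : δ < 1 := hδlt.trans_le h1
  set X : ℝ := δ ^ (-(2 / (2 * θ + 1))) with hX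
  have hX0 : 0 < X := Real.rpow_pos_of_pos hδ _
  have hX1 : 1 ≤ X := Real.one_le_rpow_of_pos_of_le_one_of_nonpos hδ hδ1.le
    (by rw [neg_nonpos]; positivity)
  set Q : ℕ := ⌈X⌉₊ with hQ
  have hXQ : X ≤ Q := Nat.le_ceil X
  have hQX : (Q:ℝ) ≤ 2 * X := by linarith [Nat.ceil_lt_add_one hX0.le]
  have hQ1 : 1 ≤ Q := Nat.ceil_pos.2 hX0
  have hδX : δ * X < 1 / 32 := by
    have := hδ₀ δ hδ hδlt
    rwa [sub_eq_add_neg, Real.rpow_add hδ, Real.rpow_one] at this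
  have hsmall : 16 * δ * Q < 1 := by nlinarith
  have hηD : (δ ^ (1 / θ)) ^ (-D) = X ^ 2 := by
    rw [← Real.rpow_mul hδ.le, hX, ← Real.rpow_natCast, ← Real.rpow_mul hδ.le, hD]
    congr 1
    have : θ ≠ 0 := by linarith
    push_cast
    field_simp
    norm_num
  have hδD : δ ^ (2 - D) * X = 1 := by
    rw [hX, ← Real.rpow_add hδ, hD]
    convert Real.rpow_zero δ using 2
    field_simp
    ring
  set S := (redFrac Q ×ˢ redFrac Q).filter fun p =>
      p.1 ≠ p.2 ∧ dist (fracPoint p.1) (fracPoint p.2) ≤ δ with hS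
  have hpos : ∀ p ∈ S, 0 < dist (fracPoint p.1) (fracPoint p.2) := by
    intro p hp
    rw [hS, Finset.mem_filter, Finset.mem_product] at hp
    exact dist_pos.2 fun h => hp.2.1 (fracPoint_inj hp.1.1 h)
  have hJ : ∃ J : ℕ, ∀ p ∈ S, δ / 2 ^ J < dist (fracPoint p.1) (fracPoint p.2) := by
    have ht : Tendsto (fun J : ℕ => δ / (2:ℝ) ^ J) atTop (nhds 0) := by
      have := (tendsto_pow_atTop_nhds_zero_of_lt_one (by norm_num : (0:ℝ) ≤ 1 / 2)
        (by norm_num)).const_mul δ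
      simpa [div_eq_mul_inv] using this
    exact ((Filter.eventually_all_finset S).2 fun p hp =>
      ht.eventually_lt_const (hpos p hp)).exists
  obtain ⟨J, hJ⟩ := hJ
  have henergy : ∑ p ∈ S, dist (fracPoint p.1) (fracPoint p.2) ^ (-D)
      ≤ C * (13824 * (Q : ℝ) ^ 5) * δ ^ (2 - D) := by
    refine sum_rpow_neg_le _ (by positivity) hD0 hD2 hC0.le hCeq J S δ hδ ?_ ?_
    · intro p hp
      exact ⟨hJ p hp, (Finset.mem_filter.1 hp).2.2⟩
    · intro r hr hrδ
      refine le_trans ?_ (card_near_le hQ1 hr ?_)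
      · refine Nat.cast_le.2 (Finset.card_le_card fun p hp => ?_)
        rw [Finset.mem_filter, hS, Finset.mem_filter] at hp
        exact Finset.mem_filter.2 ⟨hp.1.1, hp.1.2.1, hp.2⟩
      · refine lt_of_le_of_lt ?_ hsmall
        gcongr
  have hmain := card_sq_le_energy_mul (redFrac Q) fracPoint U (s := D)
    (Real.rpow_pos_of_pos hδ (1 / θ)) hD0.le hU ?_ ?_
  rotate_left
  · intro x hx
    rw [mem_redFrac] at hx
    exact hcov (reduced_mem_Gset hx.2.1 hx.2.2.1 hx.2.2.2)
  · exact fun x hx y _ hne h => hne (fracPoint_inj hx h)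
  rw [← hS, hηD] at hmain
  have hlow : (Q:ℝ) ^ 2 ≤ (redFrac Q).card := by exact_mod_cast card_redFrac_lower hQ1
  have hup : ((redFrac Q).card : ℝ) ≤ 16 * (Q:ℝ) ^ 2 := by exact_mod_cast card_redFrac_upper Q
  have hE : (redFrac Q).card * X ^ 2 + ∑ p ∈ S, dist (fracPoint p.1) (fracPoint p.2) ^ (-D)
      ≤ B * X ^ 4 := by
    have hδD' : δ ^ (2 - D) = 1 / X := by rw [eq_div_iff hX0.ne', hδD]
    calc _ ≤ 16 * (2 * X) ^ 2 * X ^ 2 + C * (13824 * (2 * X) ^ 5) * (1 / X) := by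
          refine add_le_add ?_ (henergy.trans ?_)
          · gcongr; exact hup.trans (by gcongr)
          · rw [hδD']; gcongr
      _ = B * X ^ 4 := by rw [hB]; field_simp; ring
  have hsum0 : 0 ≤ ∑ i, Metric.diam (U i) ^ D :=
    Finset.sum_nonneg fun i _ => Real.rpow_nonneg Metric.diam_nonneg _
  have hX4 : X ^ 4 ≤ ((redFrac Q).card : ℝ) ^ 2 := by
    calc X ^ 4 = (X ^ 2) ^ 2 := by ring
      _ ≤ _ := by gcongr; exact le_trans (by gcongr) hlow
  have hfin : X ^ 4 * 1 ≤ X ^ 4 * (B * ∑ i, Metric.diam (U i) ^ D) := by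
    rw [mul_one]
    refine (hX4.trans hmain).trans ?_
    calc _ ≤ B * X ^ 4 * ∑ i, Metric.diam (U i) ^ D := by gcongr
      _ = _ := by ring
  rw [div_le_iff₀ hB0]
  linarith [le_of_mul_le_mul_left hfin (by positivity)]

/-! ### Covers by balls -/

/-- Covers indexed by an arbitrary finite type serve as well as those indexed by `Fin m`. -/
theorem exists_fin_cover {ι X : Type*} [Fintype ι] [PseudoMetricSpace X] {S : Set X}
    {lo hi s ε : ℝ} (V : ι → Set X) (hS : S ⊆ ⋃ i, V i)
    (hV : ∀ i, lo ≤ Metric.diam (V i) ∧ Metric.diam (V i) ≤ hi)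
    (hε : ∑ i, Metric.diam (V i) ^ s ≤ ε) :
    ∃ (m : ℕ) (U : Fin m → Set X), S ⊆ (⋃ i, U i) ∧
      (∀ i, lo ≤ Metric.diam (U i) ∧ Metric.diam (U i) ≤ hi) ∧
      ∑ i, Metric.diam (U i) ^ s ≤ ε := by
  refine ⟨Fintype.card ι, fun i => V ((Fintype.equivFin ι).symm i), ?_, fun i => hV _, ?_⟩
  · rwa [(Fintype.equivFin ι).symm.surjective.iUnion_comp V]
  · rwa [Equiv.sum_comp (Fintype.equivFin ι).symm (fun i => Metric.diam (V i) ^ s)]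

theorem diam_ball_plane (x : EuclideanSpace ℝ (Fin 2)) {r : ℝ} (hr : 0 ≤ r) :
    Metric.diam (Metric.closedBall x (r / 2)) = r := by
  refine le_antisymm ((Metric.diam_closedBall (by positivity)).trans (by linarith)) ?_
  set e : EuclideanSpace ℝ (Fin 2) := EuclideanSpace.single 0 (r / 2)
  have he : ‖e‖ = r / 2 := by simp [e, abs_of_nonneg hr]
  have h1 : x + e ∈ Metric.closedBall x (r / 2) := by simp [he]
  have h2 : x - e ∈ Metric.closedBall x (r / 2) := by simp [he]
  have h3 := Metric.dist_le_diam_of_mem Metric.isBounded_closedBall h1 h2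
  rw [dist_eq_norm, add_sub_sub_cancel, ← two_smul ℝ e, norm_smul, he] at h3
  norm_num at h3
  linarith

theorem dist_plane_le (x y : EuclideanSpace ℝ (Fin 2)) :
    dist x y ≤ |x 0 - y 0| + |x 1 - y 1| := by
  rw [EuclideanSpace.dist_eq, Fin.sum_univ_two, Real.dist_eq, Real.dist_eq]
  refine Real.sqrt_le_iff.2 ⟨by positivity, ?_⟩
  nlinarith [abs_nonneg (x 0 - y 0), abs_nonneg (x 1 - y 1)]

theorem exists_grid {δ x w : ℝ} (hδ : 0 < δ) (hx : 0 ≤ x) (hxw : x ≤ w) :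
    ∃ i : Fin (⌊4 * w / δ⌋₊ + 1), |x - (i : ℕ) * (δ / 4)| ≤ δ / 4 := by
  have h0 : 0 ≤ 4 * x / δ := by positivity
  refine ⟨⟨⌊4 * x / δ⌋₊, Nat.lt_succ_of_le (Nat.floor_le_floor (by gcongr))⟩, ?_⟩
  have h1 := Nat.floor_le h0
  have h2 := Nat.lt_floor_add_one (4 * x / δ)
  rw [le_div_iff₀ hδ] at h1
  rw [div_lt_iff₀ hδ] at h2
  dsimp only
  rw [abs_le]
  constructor <;> nlinarith

/-- Points of `F_{1,2}` with denominator at most `Q` are covered by balls of the smallest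
diameter `η`, one for each point, and all others lie in the strip of height `1 / Q`, which is
covered by a grid of balls of the largest diameter `δ`. -/
theorem exists_two_scale_cover {η δ s : ℝ} (hη : 0 < η) (hηδ : η ≤ δ) {Q : ℕ} (hQ : 1 ≤ Q) :
    ∃ (m : ℕ) (U : Fin m → Set (EuclideanSpace ℝ (Fin 2))), Fset 1 2 ⊆ (⋃ i, U i) ∧
      (∀ i, η ≤ Metric.diam (U i) ∧ Metric.diam (U i) ≤ δ) ∧
      ∑ i, Metric.diam (U i) ^ s ≤
        ((Q:ℝ) + 1) ^ 2 * η ^ s + (4 / δ + 1) * (4 / (Q * δ) + 1) * δ ^ s := by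
  have hδ : 0 < δ := hη.trans_le hηδ
  have hQ0 : (0:ℝ) < Q := by exact_mod_cast hQ
  set I := ⌊4 * (1:ℝ) / δ⌋₊ with hI
  set J := ⌊4 * (1 / (Q:ℝ)) / δ⌋₊ with hJ
  set V : (Fin (Q + 1) × Fin (Q + 1)) ⊕ (Fin (I + 1) × Fin (J + 1)) →
      Set (EuclideanSpace ℝ (Fin 2)) :=
    Sum.elim (fun x => Metric.closedBall (fracPoint ((x.1 : ℕ), (x.2 : ℕ))) (η / 2))
      (fun x => Metric.closedBall !₂[((x.1 : ℕ) : ℝ) * (δ / 4), ((x.2 : ℕ) : ℝ) * (δ / 4)] (δ / 2))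
    with hV
  have hl : ∀ x, Metric.diam (V (Sum.inl x)) = η := fun x => diam_ball_plane _ hη.le
  have hr : ∀ x, Metric.diam (V (Sum.inr x)) = δ := fun x => diam_ball_plane _ hδ.le
  refine exists_fin_cover V ?_ ?_ ?_
  · have strip : ∀ z : EuclideanSpace ℝ (Fin 2), 0 ≤ z 0 → z 0 ≤ 1 → 0 ≤ z 1 → z 1 ≤ 1 / (Q:ℝ) →
        z ∈ ⋃ i, V i := by
      intro z h1 h2 h3 h4
      obtain ⟨i, hi⟩ := exists_grid hδ h1 h2
      obtain ⟨j, hj⟩ := exists_grid hδ h3 h4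
      refine mem_iUnion.2 ⟨Sum.inr (i, j), ?_⟩
      rw [hV, Sum.elim_inr, Metric.mem_closedBall]
      refine (dist_plane_le _ _).trans ?_
      simp only [Matrix.cons_val_zero, Matrix.cons_val_one]
      linarith
    intro z hz
    rw [mem_Fset_iff] at hz
    rcases hz with ⟨p, q, hp, hpq, h0, h1⟩ | ⟨h0, h1⟩
    · have hq0 : (0:ℝ) < q := by norm_cast; omega
      by_cases hqQ : q ≤ Q
      · refine mem_iUnion.2 ⟨Sum.inl (⟨p, by omega⟩, ⟨q, by omega⟩), ?_⟩
        have : z = fracPoint (p, q) := by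
          ext i; fin_cases i <;> simp [fracPoint, h0, h1]
        rw [this]
        exact Metric.mem_closedBall_self (by positivity)
      · refine strip z ?_ ?_ ?_ ?_
        · rw [h0]; positivity
        · rw [h0, div_le_one hq0]; exact_mod_cast hpq.le
        · rw [h1]; positivity
        · rw [h1]
          refine one_div_le_one_div_of_le hQ0 ?_
          exact Nat.cast_le.2 (not_le.1 hqQ).le
    · exact strip z h0.1 h0.2 h1.ge (by rw [h1]; positivity)
  · rintro (x | x)
    · rw [hl]; exact ⟨le_rfl, hηδ⟩
    · rw [hr]; exact ⟨hηδ, le_rfl⟩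
  · rw [Fintype.sum_sum_type]
    simp only [hl, hr, Finset.sum_const, Finset.card_univ, Fintype.card_prod, Fintype.card_fin,
      nsmul_eq_mul]
    push_cast
    have hI' : (I:ℝ) ≤ 4 / δ := by
      rw [hI, mul_one]; exact Nat.floor_le (by positivity)
    have hJ' : (J:ℝ) ≤ 4 / (Q * δ) := by
      refine (Nat.floor_le (by positivity)).trans_eq ?_
      field_simp
    refine add_le_add (le_of_eq (by ring)) ?_
    gcongr

/-- In the two-scale cover take `Q ≈ δ ^ (-a)`.  The two contributions are of orders
`δ ^ (s / θ - 2 a)` and `δ ^ (s - 2 + a) + δ ^ (s - 1)`; an `a` making the exponents positive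
exists exactly when `s > 4 θ / (2 θ + 1)`. -/
theorem exists_cheap_cover {θ s : ℝ} (h : 1 / 2 ≤ θ) (hθ1 : θ ≤ 1)
    (hs : 4 * θ / (2 * θ + 1) < s) {ε : ℝ} (hε : 0 < ε) :
    ∃ δ₀ : ℝ, 0 < δ₀ ∧ δ₀ ≤ 1 ∧ ∀ δ : ℝ, 0 < δ → δ < δ₀ →
      ∃ (m : ℕ) (U : Fin m → Set (EuclideanSpace ℝ (Fin 2))),
        Fset 1 2 ⊆ (⋃ i, U i) ∧
        (∀ i, δ ^ (1 / θ) ≤ Metric.diam (U i) ∧ Metric.diam (U i) ≤ δ) ∧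
        (∑ i, Metric.diam (U i) ^ s) ≤ ε := by
  have hθ0 : 0 < θ := by linarith
  have hden : 0 < 2 * θ + 1 := by linarith
  have hs' : 4 * θ < s * (2 * θ + 1) := (div_lt_iff₀ hden).1 hs
  have hs1 : 1 < s := by
    refine lt_of_le_of_lt ?_ hs
    rw [le_div_iff₀ hden]; linarith
  obtain ⟨a, ha1, ha2⟩ : ∃ a, max 0 (2 - s) < a ∧ a < s / (2 * θ) := by
    refine exists_between (max_lt (by positivity) ?_)
    rw [lt_div_iff₀ (by positivity)]
    linarith
  have ha0 : 0 < a := (le_max_left _ _).trans_lt ha1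
  have ha3 : 0 < s - 2 + a := by linarith [(le_max_right 0 (2 - s)).trans_lt ha1]
  have ha4 : 0 < s / θ - 2 * a := by
    have : s / θ = 2 * (s / (2 * θ)) := by field_simp
    linarith
  obtain ⟨δ₁, h11, h12, h13⟩ := exists_small_rpow ha4 (by positivity : 0 < ε / 27)
  obtain ⟨δ₂, h21, h22, h23⟩ := exists_small_rpow ha3 (by positivity : 0 < ε / 60)
  obtain ⟨δ₃, h31, h32, h33⟩ := exists_small_rpow (sub_pos.2 hs1) (by positivity : 0 < ε / 15)
  refine ⟨min δ₁ (min δ₂ δ₃), by positivity, (min_le_left _ _).trans h12, fun δ hδ hlt => ?_⟩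
  rw [lt_min_iff, lt_min_iff] at hlt
  have e1 := h13 δ hδ hlt.1
  have e2 := h23 δ hδ hlt.2.1
  have e3 := h33 δ hδ hlt.2.2
  have hδ1 : δ < 1 := hlt.1.trans_le h12
  have hη : 0 < δ ^ (1 / θ) := Real.rpow_pos_of_pos hδ _
  have hηδ : δ ^ (1 / θ) ≤ δ := by
    conv_rhs => rw [← Real.rpow_one δ]
    refine Real.rpow_le_rpow_of_exponent_ge hδ hδ1.le ?_
    rw [le_div_iff₀ hθ0]; linarith
  set X : ℝ := δ ^ (-a) with hX
  have hX0 : 0 < X := Real.rpow_pos_of_pos hδ _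
  have hX1 : 1 ≤ X := Real.one_le_rpow_of_pos_of_le_one_of_nonpos hδ hδ1.le (by linarith)
  have hXQ : X ≤ ⌈X⌉₊ := Nat.le_ceil X
  have hQX : (⌈X⌉₊:ℝ) ≤ 2 * X := by linarith [Nat.ceil_lt_add_one hX0.le]
  obtain ⟨m, U, hcov, hU, hsum⟩ := exists_two_scale_cover (s := s) hη hηδ (Nat.ceil_pos.2 hX0)
  refine ⟨m, U, hcov, hU, hsum.trans ?_⟩
  have f1 : X ^ 2 * (δ ^ (1 / θ)) ^ s = δ ^ (s / θ - 2 * a) := by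
    rw [hX, ← Real.rpow_natCast, ← Real.rpow_mul hδ.le, ← Real.rpow_mul hδ.le,
      ← Real.rpow_add hδ]
    congr 1; push_cast; ring
  have f2 : 1 / (X * δ ^ 2) * δ ^ s = δ ^ (s - 2 + a) := by
    have : 1 / (X * δ ^ 2) = δ ^ (a - 2) := by
      rw [hX, ← Real.rpow_natCast, ← Real.rpow_add hδ, one_div, ← Real.rpow_neg hδ.le]
      congr 1; push_cast; ring
    rw [this, ← Real.rpow_add hδ]; congr 1; ring
  have f3 : 1 / δ * δ ^ s = δ ^ (s - 1) := by
    rw [Real.rpow_sub hδ, Real.rpow_one]; ring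
  have g1 : ((⌈X⌉₊:ℝ) + 1) ^ 2 * (δ ^ (1 / θ)) ^ s ≤ 9 * δ ^ (s / θ - 2 * a) := by
    calc _ ≤ (2 * X + X) ^ 2 * (δ ^ (1 / θ)) ^ s := by gcongr
      _ = 9 * (X ^ 2 * (δ ^ (1 / θ)) ^ s) := by ring
      _ = _ := by rw [f1]
  have hδinv : 1 ≤ 1 / δ := by rw [le_div_iff₀ hδ]; linarith
  have g2 : (4 / δ + 1) * (4 / (⌈X⌉₊ * δ) + 1) * δ ^ s ≤
      20 * δ ^ (s - 2 + a) + 5 * δ ^ (s - 1) := by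
    calc _ ≤ (4 / δ + 1 / δ) * (4 / (X * δ) + 1) * δ ^ s := by gcongr
      _ = 20 * (1 / (X * δ ^ 2) * δ ^ s) + 5 * (1 / δ * δ ^ s) := by field_simp; ring
      _ = _ := by rw [f2, f3]
  linarith

/-! ### Projection to the axis, and the dimensions -/

/-- The projection of the graph to the first axis covers `[0, 1]` and does not increase
diameters. -/
theorem one_le_sum_diam {m : ℕ} (U : Fin m → Set (EuclideanSpace ℝ (Fin 2)))
    (hcov : Gset 1 2 ⊆ ⋃ i, U i) (hpos : ∀ i, 0 < Metric.diam (U i)) :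
    1 ≤ ∑ i, Metric.diam (U i) := by
  have h1 : ENNReal.ofReal 1 ≤ ENNReal.ofReal (∑ i, Metric.diam (U i)) := by
    calc ENNReal.ofReal 1 = volume (Icc (0:ℝ) 1) := by simp
      _ ≤ volume (⋃ i, (fun z : EuclideanSpace ℝ (Fin 2) => z 0) '' U i) := by
          refine measure_mono (Icc_subset_image_Gset.trans ?_)
          rw [← image_iUnion]
          exact image_mono hcov
      _ ≤ ∑ i, volume ((fun z : EuclideanSpace ℝ (Fin 2) => z 0) '' U i) :=
          measure_iUnion_fintype_le _ _
      _ ≤ ∑ i, ENNReal.ofReal (Metric.diam (U i)) := by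
          refine Finset.sum_le_sum fun i _ => ?_
          have hb : Bornology.IsBounded (U i) := by
            by_contra h
            exact (hpos i).ne' (Metric.diam_eq_zero_of_unbounded h)
          refine (Real.volume_le_diam _).trans ?_
          refine (lipschitz_fst.ediam_image_le _).trans ?_
          rw [Metric.diam, ENNReal.ofReal_toReal hb.ediam_ne_top, ENNReal.coe_one, one_mul]
      _ = _ := (ENNReal.ofReal_sum_of_nonneg fun i _ => Metric.diam_nonneg).symm
  exact (ENNReal.ofReal_le_ofReal_iff (Finset.sum_nonneg fun i _ => Metric.diam_nonneg)).1 h1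

/-- A set between the graph and `F_{1,2}` has both intermediate dimensions equal to `D` once
covers of `F_{1,2}` can be made cheap at every exponent above `D`, while covers of the graph cost
at least a constant at the exponent `D`. -/
theorem intDim_eq {θ D : ℝ} (hθ : 0 < θ) (hD : 0 ≤ D)
    (hup : ∀ s, D < s → ∀ ε : ℝ, 0 < ε → ∃ δ₀ : ℝ, 0 < δ₀ ∧ δ₀ ≤ 1 ∧
      ∀ δ : ℝ, 0 < δ → δ < δ₀ → ∃ (m : ℕ) (U : Fin m → Set (EuclideanSpace ℝ (Fin 2))),
        Fset 1 2 ⊆ (⋃ i, U i) ∧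
        (∀ i, δ ^ (1 / θ) ≤ Metric.diam (U i) ∧ Metric.diam (U i) ≤ δ) ∧
        (∑ i, Metric.diam (U i) ^ s) ≤ ε)
    (hlow : ∃ c δ₀ : ℝ, 0 < c ∧ 0 < δ₀ ∧ δ₀ ≤ 1 ∧ ∀ δ : ℝ, 0 < δ → δ < δ₀ →
      ∀ (m : ℕ) (U : Fin m → Set (EuclideanSpace ℝ (Fin 2))), Gset 1 2 ⊆ (⋃ i, U i) →
        (∀ i, δ ^ (1 / θ) ≤ Metric.diam (U i) ∧ Metric.diam (U i) ≤ δ) →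
        c ≤ ∑ i, Metric.diam (U i) ^ D)
    {S : Set (EuclideanSpace ℝ (Fin 2))} (hG : Gset 1 2 ⊆ S) (hF : S ⊆ Fset 1 2) :
    upperIntDim 2 θ S = D ∧ lowerIntDim 2 θ S = D := by
  rw [upperIntDim, lowerIntDim, if_neg hθ.ne', if_neg hθ.ne']
  set A := {s : ℝ | 0 ≤ s ∧ ∀ ε : ℝ, 0 < ε → ∃ δ₀ : ℝ, 0 < δ₀ ∧ δ₀ ≤ 1 ∧
    ∀ δ : ℝ, 0 < δ → δ < δ₀ →
    ∃ (m : ℕ) (U : Fin m → Set (EuclideanSpace ℝ (Fin 2))),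
      S ⊆ (⋃ i, U i) ∧ (∀ i, δ ^ (1/θ) ≤ Metric.diam (U i) ∧ Metric.diam (U i) ≤ δ) ∧
      (∑ i, Metric.diam (U i) ^ s) ≤ ε} with hA
  set B := {s : ℝ | 0 ≤ s ∧ ∀ ε : ℝ, 0 < ε → ∀ δ₀ : ℝ, 0 < δ₀ → δ₀ ≤ 1 →
    ∃ δ : ℝ, 0 < δ ∧ δ < δ₀ ∧
    ∃ (m : ℕ) (U : Fin m → Set (EuclideanSpace ℝ (Fin 2))),
      S ⊆ (⋃ i, U i) ∧ (∀ i, δ ^ (1/θ) ≤ Metric.diam (U i) ∧ Metric.diam (U i) ≤ δ) ∧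
      (∑ i, Metric.diam (U i) ^ s) ≤ ε} with hB
  have hAB : A ⊆ B := by
    rintro s ⟨hs, h⟩
    refine ⟨hs, fun ε hε δ₀ h0 h1 => ?_⟩
    obtain ⟨δ₁, h2, h3, h4⟩ := h ε hε
    have hm : 0 < min δ₀ δ₁ := lt_min h0 h2
    have hm1 := min_le_left δ₀ δ₁
    have hm2 := min_le_right δ₀ δ₁
    exact ⟨min δ₀ δ₁ / 2, by linarith, by linarith, h4 _ (by linarith) (by linarith)⟩
  have hIoi : Ioi D ⊆ A := by
    intro s hs
    refine ⟨hD.trans (le_of_lt hs), fun ε hε => ?_⟩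
    obtain ⟨δ₀, h0, h1, h2⟩ := hup s hs ε hε
    refine ⟨δ₀, h0, h1, fun δ hδ hlt => ?_⟩
    obtain ⟨m, U, hU, h3⟩ := h2 δ hδ hlt
    exact ⟨m, U, hF.trans hU, h3⟩
  have hBD : B ⊆ Ici D := by
    rintro s ⟨hs, h⟩
    by_contra hsD
    rw [mem_Ici, not_le] at hsD
    obtain ⟨c, δ₀, hc, h0, h1, h2⟩ := hlow
    obtain ⟨δ, hδ, hlt, m, U, hU, h3, h4⟩ := h (c / 2) (by positivity) δ₀ h0 h1
    have h5 := h2 δ hδ hlt m U (hG.trans hU) h3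
    have h6 : ∑ i, Metric.diam (U i) ^ D ≤ ∑ i, Metric.diam (U i) ^ s := by
      refine Finset.sum_le_sum fun i _ => ?_
      exact Real.rpow_le_rpow_of_exponent_ge ((Real.rpow_pos_of_pos hδ _).trans_le (h3 i).1)
        ((h3 i).2.trans (hlt.le.trans h1)) hsD.le
    linarith
  have key : ∀ T : Set ℝ, Ioi D ⊆ T → T ⊆ Ici D → sInf T = D := by
    intro T h1 h2
    refine le_antisymm ?_ (le_csInf (nonempty_Ioi.mono h1) h2)
    rw [← csInf_Ioi (a := D)]
    exact csInf_le_csInf ⟨D, h2⟩ nonempty_Ioi h1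
  exact ⟨key A hIoi (hAB.trans hBD), key B (hIoi.trans hAB) hBD⟩

theorem intDim_of_le_half {θ : ℝ} (h0 : 0 ≤ θ) (h : θ ≤ 1 / 2)
    {S : Set (EuclideanSpace ℝ (Fin 2))} (hG : Gset 1 2 ⊆ S) (hF : S ⊆ Fset 1 2) :
    upperIntDim 2 θ S = 1 ∧ lowerIntDim 2 θ S = 1 := by
  rcases h0.eq_or_lt with rfl | h0
  · rw [upperIntDim, lowerIntDim, if_pos rfl, if_pos rfl]
    exact ⟨dimH_between hG hF, dimH_between hG hF⟩
  refine intDim_eq h0 zero_le_one ?_ ?_ hG hF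
  · -- a cover admissible for `1 / 2` is admissible for every smaller parameter
    intro s hs ε hε
    obtain ⟨δ₀, h1, h2, h3⟩ := exists_cheap_cover (θ := 1 / 2) le_rfl (by norm_num)
      (by norm_num; exact hs) hε
    refine ⟨δ₀, h1, h2, fun δ hδ hlt => ?_⟩
    obtain ⟨m, U, hU, h4, h5⟩ := h3 δ hδ hlt
    refine ⟨m, U, hU, fun i => ⟨le_trans ?_ (h4 i).1, (h4 i).2⟩, h5⟩
    refine Real.rpow_le_rpow_of_exponent_ge hδ (hlt.le.trans h2) ?_
    exact one_div_le_one_div_of_le h0 h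
  · refine ⟨1, 1, one_pos, one_pos, le_rfl, fun δ hδ _ m U hcov hU => ?_⟩
    simp_rw [Real.rpow_one]
    exact one_le_sum_diam U hcov fun i => (Real.rpow_pos_of_pos hδ _).trans_le (hU i).1

theorem intDim_of_half_lt {θ : ℝ} (h : 1 / 2 < θ) (hθ1 : θ ≤ 1)
    {S : Set (EuclideanSpace ℝ (Fin 2))} (hG : Gset 1 2 ⊆ S) (hF : S ⊆ Fset 1 2) :
    upperIntDim 2 θ S = 4 * θ / (2 * θ + 1) ∧ lowerIntDim 2 θ S = 4 * θ / (2 * θ + 1) := by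
  have h0 : 0 < θ := by linarith
  exact intDim_eq h0 (by positivity) (fun s hs ε hε => exists_cheap_cover h.le hθ1 hs hε)
    (exists_lower_bound h) hG hF

/-- the intermediate dimensions of the popcorn graph `G_{1,2}` and of `F_{1,2}`. -/
theorem intermediate_dimensions_of_popcorn_graph (θ : ℝ) (hθ0 : 0 ≤ θ) (hθ1 : θ ≤ 1) :
    (θ ≤ 1/2 →
      upperIntDim 2 θ (Gset 1 2) = 1 ∧ lowerIntDim 2 θ (Gset 1 2) = 1 ∧
      upperIntDim 2 θ (Fset 1 2) = 1 ∧ lowerIntDim 2 θ (Fset 1 2) = 1) ∧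
    (1/2 < θ →
      upperIntDim 2 θ (Gset 1 2) = 4*θ/(2*θ+1) ∧ lowerIntDim 2 θ (Gset 1 2) = 4*θ/(2*θ+1) ∧
      upperIntDim 2 θ (Fset 1 2) = 4*θ/(2*θ+1) ∧ lowerIntDim 2 θ (Fset 1 2) = 4*θ/(2*θ+1)) := by
  refine ⟨fun h => ?_, fun h => ?_⟩
  · have hG := intDim_of_le_half hθ0 h subset_rfl Gset_subset_Fset
    have hF := intDim_of_le_half hθ0 h Gset_subset_Fset subset_rfl
    exact ⟨hG.1, hG.2, hF.1, hF.2⟩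
  · have hG := intDim_of_half_lt h hθ1 subset_rfl Gset_subset_Fset
    have hF := intDim_of_half_lt h hθ1 Gset_subset_Fset subset_rfl
    exact ⟨hG.1, hG.2, hF.1, hF.2⟩
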